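/- (MaxProb/MaxEnt convergence) Let X be a finite alphabet and q a source with all q_i > 0. For each n let ν̂^n be a μ-projection of q on Π_n = Π ∩ P_n (a maximizer of the type probability π(ν; q) over n-types in Π), where Π is a closed subset of the simplex with Π_n nonempty for all large n and such that every point of Π is a limit of n-types in Π. Then every limit point of the sequence (ν̂^n) is an I-projection of q on Π, i.e., minimizes I(p‖q) over Π. -/

import Mathlib

open Real Filter Topology Finset

/-- A probability mass function on `Fin m`. -/
def IsPMF {m : ℕ} (p : Fin m → ℝ) : Prop := (∀ i, 0 ≤ p i) ∧ ∑ i, p i = 1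

/-- An `n`-type: a pmf whose entries are integer multiples of `1/n`. -/
def IsType {m : ℕ} (n : ℕ) (ν : Fin m → ℝ) : Prop :=
  IsPMF ν ∧ ∀ i, ∃ k : ℕ, ν i = (k : ℝ) / n

/-- Multiplicity `Γ(ν) = n! / ∏ (n νᵢ)!` of an `n`-type. -/
noncomputable def mult {m : ℕ} (n : ℕ) (ν : Fin m → ℝ) : ℝ :=
  (n.factorial : ℝ) / ∏ i, (Nat.factorial ⌊(n : ℝ) * ν i⌋₊ : ℝ)

/-- Probability `π(ν; q) = Γ(ν) ∏ qᵢ^{n νᵢ}` of the type `ν` in `n` iid draws from `q`. -/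
noncomputable def typeProb {m : ℕ} (n : ℕ) (ν q : Fin m → ℝ) : ℝ :=
  mult n ν * ∏ i, q i ^ ((n : ℝ) * ν i)

/-- Kullback–Leibler divergence (with `0 log 0 = 0`, automatic since `Real.log 0 = 0`). -/
noncomputable def KL {m : ℕ} (p q : Fin m → ℝ) : ℝ := ∑ i, p i * Real.log (p i / q i)

/-- Shannon entropy. -/
noncomputable def entH {m : ℕ} (ν : Fin m → ℝ) : ℝ := -∑ i, ν i * Real.log (ν i)

/-- Total variation metric `d(a,b) = ∑ |aᵢ - bᵢ|`. -/
noncomputable def tv {m : ℕ} (a b : Fin m → ℝ) : ℝ := ∑ i, |a i - b i|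

/-- The finite set of all `n`-types on `Fin m`. -/
noncomputable def typeFinset (n m : ℕ) : Finset (Fin m → ℝ) := by
  classical
  exact ((Fintype.piFinset (fun _ : Fin m => Finset.range (n + 1))).filter
      (fun k => ∑ i, k i = n)).image (fun k i => (k i : ℝ) / n)

open scoped Classical in
/-- Conditional probability that the empirical `n`-type lies in `A`, given it lies in `B`;
expressed as a ratio of type-probability sums. -/
noncomputable def condProb {m : ℕ} (n : ℕ) (q : Fin m → ℝ)
    (A B : Set (Fin m → ℝ)) : ℝ :=
  (∑ ν ∈ (typeFinset n m).filter (fun ν => ν ∈ A ∩ B), typeProb n ν q) /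
  (∑ ν ∈ (typeFinset n m).filter (fun ν => ν ∈ B), typeProb n ν q)

/-!
By Stirling's formula the multiplicity of an `n`-type `ν` satisfies
`log Γ(ν) = n H(ν) + O(log n)`, uniformly in `ν`, so that `log π(ν; q) / n = -I(ν‖q) + o(1)`. Since
`I(·‖q)` is continuous, the inequality `π(T_n; q) ≤ π(ν̂ⁿ; q)`, for `n`-types `T_n → p'`, becomes
`I(p‖q) ≤ I(p'‖q)` along any filter on which `ν̂ⁿ → p`.
-/

/-- The error of the crude Stirling approximation `log k! ≈ k log k - k`; it is `0` at `k = 0`,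
where `Real.log 0 = 0`. -/
noncomputable def logFactorialError (k : ℕ) : ℝ :=
  log k.factorial - (k * log k - k)

theorem logFactorialError_nonneg (k : ℕ) : 0 ≤ logFactorialError k := by
  rcases eq_or_ne k 0 with rfl | hk
  · simp [logFactorialError]
  · have hstirling := Stirling.le_log_factorial_stirling hk
    have hlog_pi : 0 ≤ log (2 * π) := log_nonneg (by linarith [pi_gt_three])
    unfold logFactorialError
    linarith [log_natCast_nonneg k]

theorem logFactorialError_le (k : ℕ) : logFactorialError k ≤ 1 + log k / 2 := by
  cases k with
  | zero => simp [logFactorialError]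
  | succ k =>
    have hanti : log (Stirling.stirlingSeq (k + 1)) ≤ log (Stirling.stirlingSeq 1) :=
      Stirling.log_stirlingSeq'_antitone (Nat.zero_le k)
    have hone : log (Stirling.stirlingSeq 1) = 1 - log 2 / 2 := by
      rw [Stirling.stirlingSeq_one, log_div (exp_ne_zero 1) (by positivity), log_exp,
        log_sqrt zero_le_two]
    rw [hone, Stirling.log_stirlingSeq_formula, log_mul two_ne_zero (by positivity),
      log_div (by positivity) (exp_ne_zero 1), log_exp] at hanti
    unfold logFactorialError
    linarith

section Multinomial

variable {ι : Type*} (s : Finset ι) (k : ι → ℕ)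

theorem log_multinomial :
    log (Nat.multinomial s k) =
      log (∑ i ∈ s, k i).factorial - ∑ i ∈ s, log (k i).factorial := by
  have hfactorial : ∀ i ∈ s, ((k i).factorial : ℝ) ≠ 0 := fun i _ => by positivity
  have hmultinomial : (Nat.multinomial s k : ℝ) ≠ 0 :=
    Nat.cast_ne_zero.2 (Nat.multinomial_pos s k).ne'
  rw [← Nat.multinomial_spec s k, Nat.cast_mul, Nat.cast_prod,
    log_mul (prod_ne_zero_iff.2 hfactorial) hmultinomial, log_prod hfactorial,
    add_sub_cancel_left]

theorem log_multinomial_eq_add_logFactorialError :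
    log (Nat.multinomial s k) =
      (∑ i ∈ s, k i : ℕ) * log (∑ i ∈ s, k i : ℕ) - ∑ i ∈ s, k i * log (k i) +
        (logFactorialError (∑ i ∈ s, k i) - ∑ i ∈ s, logFactorialError (k i)) := by
  simp only [log_multinomial, logFactorialError, sum_sub_distrib, Nat.cast_sum]
  ring

theorem abs_log_multinomial_sub_le :
    |log (Nat.multinomial s k) -
        ((∑ i ∈ s, k i : ℕ) * log (∑ i ∈ s, k i : ℕ) - ∑ i ∈ s, k i * log (k i))| ≤
      (#s + 1) * (1 + log (∑ i ∈ s, k i : ℕ) / 2) := by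
  set n := ∑ i ∈ s, k i
  have herror_le : ∀ j ≤ n, logFactorialError j ≤ 1 + log n / 2 := by
    intro j hj
    rcases Nat.eq_zero_or_pos j with rfl | hj_pos
    · simp only [logFactorialError, Nat.factorial_zero, Nat.cast_one, log_one, Nat.cast_zero,
        zero_mul, sub_self]
      linarith [log_natCast_nonneg n]
    · refine (logFactorialError_le j).trans ?_
      gcongr
  have hsum_nonneg : 0 ≤ ∑ i ∈ s, logFactorialError (k i) :=
    sum_nonneg fun i _ => logFactorialError_nonneg (k i)
  have hsum_le : ∑ i ∈ s, logFactorialError (k i) ≤ #s * (1 + log n / 2) := by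
    rw [← nsmul_eq_mul]
    exact sum_le_card_nsmul _ _ _ fun i hi =>
      herror_le _ (single_le_sum (fun _ _ => Nat.zero_le _) hi)
  rw [log_multinomial_eq_add_logFactorialError, add_sub_cancel_left, abs_le]
  constructor <;> linarith [logFactorialError_nonneg n, herror_le n le_rfl]

end Multinomial

section Types

variable {m n : ℕ} {ν q : Fin m → ℝ}

theorem IsType.ne_zero (hν : IsType n ν) : n ≠ 0 := by
  rintro rfl
  have hν_zero : ∀ i, ν i = 0 := fun i => by simpa using hν.2 i
  simpa [hν_zero] using hν.1.2

theorem IsType.exists_counts (hν : IsType n ν) :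
    ∃ k : Fin m → ℕ, ∑ i, k i = n ∧ ν = fun i => (k i : ℝ) / n := by
  have hn : (n : ℝ) ≠ 0 := mod_cast hν.ne_zero
  choose k hk using hν.2
  refine ⟨k, ?_, funext hk⟩
  have hsum := hν.1.2
  simp only [hk, ← sum_div, div_eq_one_iff_eq hn] at hsum
  exact_mod_cast hsum

theorem mult_counts (k : Fin m → ℕ) (hn : ∑ i, k i ≠ 0) :
    mult (∑ i, k i) (fun i => (k i : ℝ) / (∑ j, k j : ℕ)) = Nat.multinomial univ k := by
  have hcancel : ∀ i, ((∑ j, k j : ℕ) : ℝ) * (k i / (∑ j, k j : ℕ)) = k i :=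
    fun i => mul_div_cancel₀ _ (Nat.cast_ne_zero.2 hn)
  rw [mult, div_eq_iff (by positivity), ← Nat.multinomial_spec univ k]
  simp only [hcancel, Nat.floor_natCast, Nat.cast_mul, Nat.cast_prod, mul_comm]

theorem mul_entH_counts (k : Fin m → ℕ) (hn : ∑ i, k i ≠ 0) :
    (∑ i, k i : ℕ) * entH (fun i => (k i : ℝ) / (∑ j, k j : ℕ)) =
      (∑ i, k i : ℕ) * log (∑ i, k i : ℕ) - ∑ i, k i * log (k i) := by
  set n := ∑ i, k i with hn_def
  have hn' : (n : ℝ) ≠ 0 := Nat.cast_ne_zero.2 hn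
  have hterm : ∀ i, (n : ℝ) * (k i / n * log (k i / n)) = k i * log (k i) - k i * log n := by
    intro i
    rcases eq_or_ne (k i) 0 with hk | hk
    · simp [hk]
    · rw [log_div (Nat.cast_ne_zero.2 hk) hn', ← mul_assoc, mul_div_cancel₀ _ hn', mul_sub]
  rw [entH, mul_neg, mul_sum]
  simp only [hterm, sum_sub_distrib, ← sum_mul, ← Nat.cast_sum, ← hn_def, neg_sub]

theorem IsType.abs_log_mult_sub_le (hν : IsType n ν) :
    |log (mult n ν) - n * entH ν| ≤ (m + 1) * (1 + log n / 2) := by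
  have hn := hν.ne_zero
  obtain ⟨k, rfl, rfl⟩ := hν.exists_counts
  simpa only [mult_counts k hn, mul_entH_counts k hn, card_univ, Fintype.card_fin] using
    abs_log_multinomial_sub_le univ k

theorem mult_pos (n : ℕ) (ν : Fin m → ℝ) : 0 < mult n ν := by
  unfold mult
  positivity

theorem typeProb_pos (n : ℕ) (ν : Fin m → ℝ) (hq : ∀ i, 0 < q i) : 0 < typeProb n ν q :=
  mul_pos (mult_pos n ν) (prod_pos fun i _ => rpow_pos_of_pos (hq i) _)

theorem log_typeProb (n : ℕ) (ν : Fin m → ℝ) (hq : ∀ i, 0 < q i) :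
    log (typeProb n ν q) = log (mult n ν) + n * ∑ i, ν i * log (q i) := by
  have hpow : ∀ i ∈ univ, q i ^ (n * ν i) ≠ 0 := fun i _ => (rpow_pos_of_pos (hq i) _).ne'
  rw [typeProb, log_mul (mult_pos n ν).ne' (prod_ne_zero_iff.2 hpow), log_prod hpow, mul_sum]
  simp only [log_rpow (hq _), mul_assoc]

end Types

section Continuity

variable {m : ℕ} {q : Fin m → ℝ}

theorem KL_eq_neg_entH_sub (p : Fin m → ℝ) (hq : ∀ i, q i ≠ 0) :
    KL p q = -entH p - ∑ i, p i * log (q i) := by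
  rw [KL, entH, neg_neg, ← sum_sub_distrib]
  refine sum_congr rfl fun i _ => ?_
  rcases eq_or_ne (p i) 0 with hp | hp
  · simp [hp]
  · rw [log_div hp (hq i), mul_sub]

theorem continuous_entH : Continuous (entH : (Fin m → ℝ) → ℝ) :=
  (continuous_finsetSum _ fun i _ => continuous_mul_log.comp (continuous_apply i)).neg

theorem continuous_KL_left (hq : ∀ i, q i ≠ 0) : Continuous fun p => KL p q := by
  simp only [KL_eq_neg_entH_sub _ hq]
  exact continuous_entH.neg.sub <|
    continuous_finsetSum _ fun i _ => (continuous_apply i).mul continuous_const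

end Continuity

section ExponentialRate

variable {m : ℕ} {l : Filter ℕ} {ν : ℕ → Fin m → ℝ} {p q : Fin m → ℝ}

theorem tendsto_log_natCast_div_natCast : Tendsto (fun n : ℕ => log n / n) atTop (𝓝 0) :=
  isLittleO_log_id_atTop.tendsto_div_nhds_zero.comp tendsto_natCast_atTop_atTop

theorem tendsto_log_mult_div (hl : l ≤ atTop) (hν : ∀ᶠ n in l, IsType n (ν n))
    (hp : Tendsto ν l (𝓝 p)) :
    Tendsto (fun n => log (mult n (ν n)) / n) l (𝓝 (entH p)) := by
  have hbound : Tendsto (fun n : ℕ => (m + 1) * (1 / (n : ℝ) + log n / n / 2)) l (𝓝 0) := by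
    simpa using ((tendsto_one_div_atTop_nhds_zero_nat.add
      (tendsto_log_natCast_div_natCast.div_const 2)).const_mul (m + 1 : ℝ)).mono_left hl
  have herror : Tendsto (fun n => log (mult n (ν n)) / n - entH (ν n)) l (𝓝 0) := by
    refine squeeze_zero_norm' (hν.mono fun n hn => ?_) hbound
    have hn_pos : (0 : ℝ) < n := Nat.cast_pos.2 (Nat.pos_of_ne_zero hn.ne_zero)
    calc ‖log (mult n (ν n)) / n - entH (ν n)‖
        = |log (mult n (ν n)) - n * entH (ν n)| / n := by
          rw [norm_eq_abs, div_sub' hn_pos.ne', abs_div, Nat.abs_cast]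
      _ ≤ (m + 1) * (1 + log n / 2) / n := by gcongr; exact hn.abs_log_mult_sub_le
      _ = (m + 1) * (1 / n + log n / n / 2) := by ring
  simpa using herror.add ((continuous_entH.tendsto p).comp hp)

theorem tendsto_log_typeProb_div (hq : ∀ i, 0 < q i) (hl : l ≤ atTop)
    (hν : ∀ᶠ n in l, IsType n (ν n)) (hp : Tendsto ν l (𝓝 p)) :
    Tendsto (fun n => log (typeProb n (ν n) q) / n) l (𝓝 (-KL p q)) := by
  have hcross : Tendsto (fun n => ∑ i, ν n i * log (q i)) l (𝓝 (∑ i, p i * log (q i))) :=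
    tendsto_finsetSum _ fun i _ => (tendsto_pi_nhds.1 hp i).mul_const _
  have hlimit : -KL p q = entH p + ∑ i, p i * log (q i) := by
    rw [KL_eq_neg_entH_sub p fun i => (hq i).ne']
    ring
  rw [hlimit]
  refine ((tendsto_log_mult_div hl hν hp).add hcross).congr' (hν.mono fun n hn => ?_)
  dsimp only
  rw [log_typeProb n (ν n) hq, add_div, mul_div_cancel_left₀ _ (Nat.cast_ne_zero.2 hn.ne_zero)]

end ExponentialRate

section Projection

variable {m : ℕ} {q : Fin m → ℝ} {S : Set (Fin m → ℝ)}

/-- `ν` is a μ-projection of `q` on `S ∩ P_n`: an `n`-type in `S` whose probability under `q` is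
maximal among the `n`-types in `S`. -/
def IsMuProjection (n : ℕ) (q : Fin m → ℝ) (S : Set (Fin m → ℝ)) (ν : Fin m → ℝ) : Prop :=
  IsType n ν ∧ ν ∈ S ∧ ∀ ν', IsType n ν' → ν' ∈ S → typeProb n ν' q ≤ typeProb n ν q

/-- `p` is an I-projection of `q` on `S`: a point of `S` minimizing the divergence from `q`. -/
def IsIProjection (q : Fin m → ℝ) (S : Set (Fin m → ℝ)) (p : Fin m → ℝ) : Prop :=
  p ∈ S ∧ IsMinOn (fun p' => KL p' q) S p

theorem KL_le_of_tendsto_isMuProjection (hq : ∀ i, 0 < q i) {l : Filter ℕ} [l.NeBot]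
    (hl : l ≤ atTop) {ν T : ℕ → Fin m → ℝ} {p p' : Fin m → ℝ}
    (hν : ∀ᶠ n in l, IsMuProjection n q S (ν n)) (hp : Tendsto ν l (𝓝 p))
    (hT : ∀ᶠ n in l, IsType n (T n) ∧ T n ∈ S) (hp' : Tendsto T l (𝓝 p')) :
    KL p q ≤ KL p' q := by
  have hrate := tendsto_log_typeProb_div hq hl (hν.mono fun _ h => h.1) hp
  have hrate' := tendsto_log_typeProb_div hq hl (hT.mono fun _ h => h.1) hp'
  refine neg_le_neg_iff.1 (le_of_tendsto_of_tendsto hrate' hrate ?_)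
  filter_upwards [hν, hT] with n ⟨_, _, hmax⟩ ⟨htype, hmem⟩
  have hle := log_le_log (typeProb_pos n (T n) hq) (hmax (T n) htype hmem)
  gcongr

theorem stmt10_general (hq : ∀ i, 0 < q i)
    (happrox : ∀ p ∈ S, ∃ T : ℕ → Fin m → ℝ,
      (∀ᶠ n in atTop, IsType n (T n) ∧ T n ∈ S) ∧ Tendsto T atTop (𝓝 p))
    {ν : ℕ → Fin m → ℝ} (hν : ∀ᶠ n in atTop, IsMuProjection n q S (ν n))
    {p : Fin m → ℝ} (hp : MapClusterPt p atTop ν) :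
    IsIProjection q (closure S) p := by
  obtain ⟨U, hU, hlim⟩ := mapClusterPt_iff_ultrafilter.1 hp
  have hνU : ∀ᶠ n in U, IsMuProjection n q S (ν n) := hU hν
  have hmin : IsMinOn (fun p' => KL p' q) S p := isMinOn_iff.2 fun p' hp' => by
    obtain ⟨T, hT, hTlim⟩ := happrox p' hp'
    exact KL_le_of_tendsto_isMuProjection hq hU hνU hlim (hU hT) (hTlim.mono_left hU)
  exact ⟨mem_closure_of_tendsto hlim (hνU.mono fun _ h => h.2.1),
    hmin.closure (continuous_KL_left fun i => (hq i).ne').continuousOn⟩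

end Projection

/-- MaxProb/MaxEnt convergence: If ν̂^n maximizes the type probability
π(·; q) over the n-types in a closed subset S of the simplex (nonempty for large n, every
point of S being a limit of n-types in S), then every limit point of (ν̂^n) is an
I-projection of q on S. -/
theorem stmt10 {m : ℕ} (q : Fin m → ℝ) (hq : IsPMF q) (hqpos : ∀ i, 0 < q i)
    (S : Set (Fin m → ℝ)) (hsub : ∀ p ∈ S, IsPMF p) (hclosed : IsClosed S)
    (happrox : ∀ p ∈ S, ∃ T : ℕ → Fin m → ℝ,
      (∀ᶠ n in atTop, IsType n (T n) ∧ T n ∈ S) ∧ Tendsto T atTop (𝓝 p))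
    (nuhat : ℕ → Fin m → ℝ) (N : ℕ)
    (hmax : ∀ n ≥ N, IsType n (nuhat n) ∧ nuhat n ∈ S ∧
      ∀ ν, IsType n ν → ν ∈ S → typeProb n ν q ≤ typeProb n (nuhat n) q)
    (hne : ∀ n ≥ N, ∃ ν, IsType n ν ∧ ν ∈ S)
    (p : Fin m → ℝ) (φ : ℕ → ℕ) (hφ : StrictMono φ)
    (hlim : Tendsto (nuhat ∘ φ) atTop (𝓝 p)) :
    p ∈ S ∧ ∀ p' ∈ S, KL p q ≤ KL p' q :=
  hclosed.closure_eq ▸ stmt10_general hqpos happrox ((eventually_ge_atTop N).mono hmax)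
    (hlim.mapClusterPt.of_comp hφ.tendsto_atTop)
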